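/- arXiv:1302.6868 — 2 statements merged into one kernel-verified Lean document; each statement's English description precedes it below -/
import Mathlib

section
/- Let Ω ⊂ ℝ² be a bounded open set with diameter h_Ω and let d(x) denote the Euclidean distance from x ∈ Ω to the complement of Ω. Let K_1, …, K_N be a finite partition of Ω into Lebesgue-measurable sets and let ρ_1, …, ρ_N > 0 be constants defining ρ : Ω → ℝ by ρ = ρ_i on K_i, with ∫_Ω ρ dx = 1; write |K_i| for the Lebesgue measure of K_i, d_{K_i} = sup_{x ∈ K_i} d(x), and ρ_max = max_i ρ_i. Let C₀ > 0 and let G : Ω × Ω → ℝ be measurable with 0 ≤ G(x,ξ) ≤ C₀ ln(1 + d(x)d(ξ)/|x−ξ|²) for all x ≠ ξ in Ω. Suppose λ > 0 and u : Ω → ℝ is measurable, u > 0 almost everywhere, 0 < ∫_Ω ρ u² dx < ∞, and u(x) = λ ∫_Ω G(x,ξ) ρ(ξ) u(ξ) dξ for almost every x ∈ Ω. Then there exists a constant C > 0, depending only on C₀, such that λ ≥ C · ( 1 + Σ_{i=1}^N ρ_i |K_i| ( ln(1 + d_{K_i} h_Ω ρ_max) )² )^{−1/2}. -/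
open MeasureTheory

abbrev E2 := EuclideanSpace ℝ (Fin 2)

noncomputable def phi (s r : ℝ) : ℝ := Set.indicator (Set.Iio (1/s)) (fun r => 16 / (s * r)) r

noncomputable def VV : ℝ := (volume : Measure E2).real (Metric.ball 0 1)

lemma phi_nonneg {s r : ℝ} (hs : 0 < s) (hr : 0 ≤ r) : 0 ≤ phi s r := by
  unfold phi
  exact Set.indicator_apply_nonneg fun _ => by positivity

lemma phi_meas (s : ℝ) : Measurable (phi s) := by
  unfold phi
  exact Measurable.indicator (by fun_prop) measurableSet_Iio

lemma phi_eqOn {s : ℝ} (hs : 0 < s) :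
    Set.EqOn (fun y : ℝ => y ^ (Module.finrank ℝ E2 - 1) • phi s y)
      (Set.indicator (Set.Iio (1/s)) (fun _ => 16 / s)) (Set.Ioi 0) := by
  intro y hy
  have hy : 0 < y := hy
  have h2 : Module.finrank ℝ E2 = 2 := by simp
  simp only [h2, phi, Set.indicator_apply, smul_eq_mul]
  split_ifs
  · norm_num
    field_simp
  · simp

lemma phi_int {s : ℝ} (hs : 0 < s) :
    ∫⁻ y : E2, ENNReal.ofReal (phi s ‖y‖) = ENNReal.ofReal (2 * VV * (16 / s ^ 2)) := by
  have hvol : volume (Set.Iio (1/s) ∩ Set.Ioi 0) = ENNReal.ofReal (1/s) := by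
    rw [Set.inter_comm, Set.Ioi_inter_Iio, Real.volume_Ioo]; simp
  have hint : Integrable (fun y : E2 => phi s ‖y‖) := by
    rw [integrable_fun_norm_addHaar]
    refine IntegrableOn.congr_fun ?_ (phi_eqOn hs).symm measurableSet_Ioi
    rw [IntegrableOn, integrable_indicator_iff measurableSet_Iio, IntegrableOn,
      Measure.restrict_restrict measurableSet_Iio]
    apply integrableOn_const
    · rw [hvol]; exact ENNReal.ofReal_ne_top
    · simp
  rw [← ofReal_integral_eq_lintegral_ofReal hint
    (Filter.Eventually.of_forall fun y => phi_nonneg hs (norm_nonneg _))]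
  congr 1
  rw [integral_fun_norm_addHaar, setIntegral_congr_fun measurableSet_Ioi (phi_eqOn hs),
    integral_indicator measurableSet_Iio, Measure.restrict_restrict measurableSet_Iio,
    setIntegral_const, Measure.real, Measure.real, hvol,
    ENNReal.toReal_ofReal (by positivity)]
  have h2 : Module.finrank ℝ E2 = 2 := by simp
  rw [h2, VV, Measure.real]
  simp only [smul_eq_mul, nsmul_eq_mul]
  push_cast
  field_simp

lemma log_bound {s r : ℝ} (hs : 0 < s) (hr : 0 < r) :
    Real.log (1 + 1 / (s * r) ^ 2) ^ 2 ≤ 1 + phi s r := by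
  have hsr : 0 < s * r := mul_pos hs hr
  have hpos : 0 ≤ Real.log (1 + 1 / (s * r) ^ 2) := Real.log_nonneg (by
    have : 0 < 1 / (s * r) ^ 2 := by positivity
    linarith)
  by_cases h : r < 1 / s
  · have : phi s r = 16 / (s * r) := by simp [phi, h, -one_div]
    rw [this]
    set q := Real.sqrt (1 / (s * r)) with hq
    have hq0 : 0 ≤ q := Real.sqrt_nonneg _
    have hq2 : q ^ 2 = 1 / (s * r) := Real.sq_sqrt (by positivity)
    have e : 1 / (s * r) ^ 2 = q ^ 4 := by
      rw [show q ^ 4 = (q ^ 2) ^ 2 by ring, hq2]; ring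
    have h1 : Real.log (1 + q ^ 4) ≤ 4 * q := by
      calc Real.log (1 + q ^ 4) ≤ Real.log ((1 + q) ^ 4) := by
            apply Real.log_le_log (by positivity)
            have : 0 ≤ q ^ 3 := by positivity
            nlinarith [sq_nonneg q]
        _ = 4 * Real.log (1 + q) := by rw [Real.log_pow]; norm_num
        _ ≤ 4 * q := by
            have := Real.log_le_sub_one_of_pos (show 0 < 1 + q by linarith)
            linarith
    rw [e] at hpos ⊢
    calc Real.log (1 + q ^ 4) ^ 2 ≤ (4 * q) ^ 2 := by gcongr
      _ = 16 / (s * r) := by rw [mul_pow, hq2]; ring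
      _ ≤ _ := by linarith
  · have h' : 1 ≤ s * r := by
      rw [not_lt, div_le_iff₀ hs] at h; linarith
    have h1 : Real.log (1 + 1 / (s * r) ^ 2) ≤ 1 := by
      have := Real.log_le_sub_one_of_pos (show 0 < 1 + 1 / (s * r) ^ 2 by positivity)
      have h3 : 1 / (s * r) ^ 2 ≤ 1 := by
        rw [div_le_one (by positivity)]; nlinarith
      linarith
    have := phi_nonneg hs hr.le
    nlinarith

lemma log_bound2 {s r a : ℝ} (hs : 0 < s) (hr : 0 < r) (ha : 0 ≤ a) :
    Real.log (1 + a / r ^ 2) ^ 2 ≤ 2 * Real.log (1 + a * s ^ 2) ^ 2 + 2 + 2 * phi s r := by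
  have h0 : 0 ≤ a / r ^ 2 := by positivity
  have hb : 0 < 1 / (s * r) ^ 2 := by positivity
  have hc : 0 ≤ a * s ^ 2 := by positivity
  have e : a / r ^ 2 = a * s ^ 2 * (1 / (s * r) ^ 2) := by field_simp
  have h1 : Real.log (1 + a / r ^ 2) ≤
      Real.log (1 + a * s ^ 2) + Real.log (1 + 1 / (s * r) ^ 2) := by
    rw [← Real.log_mul (by positivity) (by positivity)]
    apply Real.log_le_log (by positivity)
    rw [e]; nlinarith
  have h2 := log_bound hs hr
  have h3 : 0 ≤ Real.log (1 + a / r ^ 2) := Real.log_nonneg (by linarith)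
  have h4 := pow_le_pow_left₀ h3 h1 2
  nlinarith [sq_nonneg (Real.log (1 + a * s ^ 2) - Real.log (1 + 1 / (s * r) ^ 2))]

lemma infDist_le_diam {Ω : Set E2} (hb : Bornology.IsBounded Ω) {x : E2} (hx : x ∈ Ω) :
    Metric.infDist x Ωᶜ ≤ Metric.diam Ω := by
  by_contra! h
  obtain ⟨e, he⟩ := exists_norm_eq E2 (zero_le_one' ℝ)
  have hd : 0 ≤ Metric.diam Ω := Metric.diam_nonneg
  set t := (Metric.diam Ω + Metric.infDist x Ωᶜ) / 2 with ht
  have hdist : dist x (x + t • e) = t := by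
    rw [dist_self_add_right, norm_smul, he, mul_one, Real.norm_of_nonneg (by linarith)]
  have hm : x + t • e ∈ Ω := by
    by_contra hn
    have := Metric.infDist_le_dist_of_mem (x := x) (show x + t • e ∈ Ωᶜ from hn)
    linarith
  have := Metric.dist_le_diam_of_mem hb hx hm
  linarith

lemma cs {α : Type*} [MeasurableSpace α] (μ : Measure α) {f g : α → ENNReal}
    (hf : AEMeasurable f μ) (hg : AEMeasurable g μ) :
    (∫⁻ a, f a * g a ∂μ) ^ 2 ≤ (∫⁻ a, f a ^ 2 ∂μ) * (∫⁻ a, g a ^ 2 ∂μ) := by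
  have h := ENNReal.lintegral_mul_le_Lp_mul_Lq μ Real.HolderConjugate.two_two hf hg
  have h2 := pow_le_pow_left₀ (zero_le) h 2
  have key : ∀ z : ENNReal, (z ^ (1 / (2:ℝ))) ^ 2 = z := fun z => by
    rw [← ENNReal.rpow_natCast, ← ENNReal.rpow_mul]; norm_num
  rw [mul_pow, key, key] at h2
  simpa using h2

/-- Two-dimensional lower bound for the smallest eigenvalue of the
density-weighted eigenvalue problem `-Δu = λ ρ u` with homogeneous Dirichlet
boundary conditions, via the logarithmic Green's-function bound.  The constant
`C` depends only on `C₀`. -/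
theorem eigenvalue_lower_bound_two_dim
    (C₀ : ℝ) (hC₀ : 0 < C₀) :
    ∃ C : ℝ, 0 < C ∧
      ∀ (Ω : Set (EuclideanSpace ℝ (Fin 2))) (N : ℕ)
        (K : Fin N → Set (EuclideanSpace ℝ (Fin 2))) (ρv : Fin N → ℝ)
        (ρ : EuclideanSpace ℝ (Fin 2) → ℝ)
        (G : EuclideanSpace ℝ (Fin 2) → EuclideanSpace ℝ (Fin 2) → ℝ)
        (u : EuclideanSpace ℝ (Fin 2) → ℝ) (lam : ℝ),
        IsOpen Ω → Bornology.IsBounded Ω →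
        (∀ i, MeasurableSet (K i)) → Pairwise (Function.onFun Disjoint K) →
        (⋃ i, K i) = Ω →
        (∀ i, 0 < ρv i) → (∀ i, ∀ x ∈ K i, ρ x = ρv i) →
        (∫ x in Ω, ρ x) = 1 →
        Measurable (Function.uncurry G) →
        (∀ x ∈ Ω, ∀ ξ ∈ Ω, x ≠ ξ → 0 ≤ G x ξ ∧
          G x ξ ≤ C₀ * Real.log (1 +
            Metric.infDist x Ωᶜ * Metric.infDist ξ Ωᶜ / dist x ξ ^ 2)) →
        0 < lam → Measurable u →
        (∀ᵐ x ∂(volume.restrict Ω), 0 < u x) →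
        0 < (∫⁻ x in Ω, ENNReal.ofReal (ρ x * u x ^ 2)) →
        (∫⁻ x in Ω, ENNReal.ofReal (ρ x * u x ^ 2)) < ⊤ →
        (∀ᵐ x ∂(volume.restrict Ω),
          u x = lam * ∫ ξ in Ω, G x ξ * ρ ξ * u ξ) →
        C * (Real.sqrt (1 + ∑ i, ρv i * (volume (K i)).toReal *
            (Real.log (1 +
              (⨆ x : K i, Metric.infDist (x : EuclideanSpace ℝ (Fin 2)) Ωᶜ) *
                Metric.diam Ω * (⨆ i, ρv i))) ^ 2))⁻¹ ≤ lam := by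
  have hV : 0 ≤ VV := measureReal_nonneg
  set M : ℝ := 2 + 64 * VV with hM
  have hMpos : 0 < M := by positivity
  refine ⟨(C₀ * Real.sqrt M)⁻¹, by positivity, ?_⟩
  intro Ω N K ρv ρ G u lam hO hB hKm hKd hKU hρv hρ hρ1 hGm hG hlam hu hupos hA0 hAtop heig
  set R : ℝ := ⨆ i, ρv i with hR
  set L : Fin N → ℝ := fun i => Real.log (1 +
              (⨆ x : K i, Metric.infDist (x : EuclideanSpace ℝ (Fin 2)) Ωᶜ) *
                Metric.diam Ω * R) with hL
  change (C₀ * Real.sqrt M)⁻¹ *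
    (Real.sqrt (1 + ∑ i, ρv i * (volume (K i)).toReal * L i ^ 2))⁻¹ ≤ lam
  have hKΩ : ∀ i, K i ⊆ Ω := fun i => hKU ▸ Set.subset_iUnion K i
  have hΩm : MeasurableSet Ω := hO.measurableSet
  have hmemΩ : ∀ x ∈ Ω, ∃ i, x ∈ K i := fun x hx => by
    rw [← hKU] at hx; exact Set.mem_iUnion.mp hx
  have hρpos : ∀ x ∈ Ω, 0 < ρ x := fun x hx => by
    obtain ⟨i, hi⟩ := hmemΩ x hx
    rw [hρ i x hi]; exact hρv i
  have hvol : ∀ i, volume (K i) ≠ ⊤ := fun i =>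
    ((hB.subset (hKΩ i)).measure_lt_top).ne
  set μ : Measure E2 := ∑ i, ENNReal.ofReal (ρv i) • volume.restrict (K i) with hμdef
  have hμ : ∀ F : E2 → ENNReal, ∫⁻ x, F x ∂μ =
      ∑ i, ENNReal.ofReal (ρv i) * ∫⁻ x in K i, F x := fun F => by
    rw [hμdef, lintegral_finsetSum_measure]
    simp [lintegral_smul_measure]
  have hΩ : ∀ F : E2 → ENNReal, ∫⁻ x in Ω, ENNReal.ofReal (ρ x) * F x = ∫⁻ x, F x ∂μ := by
    intro F
    rw [hμ, ← hKU, lintegral_iUnion hKm hKd, tsum_fintype]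
    refine Finset.sum_congr rfl fun i _ => ?_
    rw [← lintegral_const_mul' _ _ ENNReal.ofReal_ne_top]
    refine setLIntegral_congr_fun (hKm i) fun x hx => ?_
    simp only [hρ i x hx]
  have hmono : ∀ F H : E2 → ENNReal, (∀ᵐ x ∂(volume.restrict Ω), F x ≤ H x) →
      ∫⁻ x, F x ∂μ ≤ ∫⁻ x, H x ∂μ := fun F H h => by
    rw [← hΩ, ← hΩ]
    refine lintegral_mono_ae ?_
    filter_upwards [h] with x hx
    gcongr
  have hint : Integrable ρ (volume.restrict Ω) := by
    by_contra hn
    rw [integral_undef hn] at hρ1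
    exact zero_ne_one hρ1
  have hμ1 : ∫⁻ _, 1 ∂μ = 1 := by
    rw [← hΩ]
    simp only [mul_one]
    rw [← ofReal_integral_eq_lintegral_ofReal hint, hρ1, ENNReal.ofReal_one]
    filter_upwards [ae_restrict_mem hΩm] with x hx
    exact (hρpos x hx).le
  have hsum1 : ∑ i, ρv i * (volume (K i)).toReal = 1 := by
    have h := hμ (fun _ => 1)
    rw [hμ1] at h
    have h2 := congrArg ENNReal.toReal h
    rw [ENNReal.toReal_sum (fun i _ => ENNReal.mul_ne_top ENNReal.ofReal_ne_top
      (by simpa using hvol i))] at h2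
    simp only [ENNReal.toReal_mul, lintegral_const, one_mul, Measure.restrict_apply_univ,
      ENNReal.toReal_one] at h2
    rw [h2]
    exact Finset.sum_congr rfl fun i _ => by rw [ENNReal.toReal_ofReal (hρv i).le]
  have hRle : ∀ i, ρv i ≤ R := fun i => le_ciSup (Set.finite_range ρv).bddAbove i
  have hN : ∃ i : Fin N, True := by
    by_contra hn
    push Not at hn
    have : IsEmpty (Fin N) := ⟨fun i => hn i⟩
    simp at hsum1
  have hRpos : 0 < R := by
    obtain ⟨i, -⟩ := hN
    exact (hρv i).trans_le (hRle i)
  set s := Real.sqrt R with hs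
  have hspos : 0 < s := Real.sqrt_pos.mpr hRpos
  have hs2 : s ^ 2 = R := Real.sq_sqrt hRpos.le
  have hμR : ∀ F : E2 → ENNReal, ∫⁻ x, F x ∂μ ≤ ENNReal.ofReal R * ∫⁻ x, F x := by
    intro F
    calc ∫⁻ x, F x ∂μ = ∑ i, ENNReal.ofReal (ρv i) * ∫⁻ x in K i, F x := hμ F
      _ ≤ ∑ i, ENNReal.ofReal R * ∫⁻ x in K i, F x := by
        refine Finset.sum_le_sum fun i _ => ?_
        gcongr
        exact hRle i
      _ = ENNReal.ofReal R * ∫⁻ x in Ω, F x := by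
        rw [← Finset.mul_sum, ← hKU, lintegral_iUnion hKm hKd, tsum_fintype]
      _ ≤ _ := by
        gcongr
        exact Measure.restrict_le_self
  set B : Fin N → ℝ := fun i => C₀ ^ 2 * (2 * L i ^ 2 + M) with hBdef
  have hBnn : ∀ i, 0 ≤ B i := fun i => by positivity
  have hg : ∀ i, ∀ x ∈ K i, ∫⁻ ξ, ‖G x ξ‖ₑ ^ 2 ∂μ ≤ ENNReal.ofReal (B i) := by
    intro i x hx
    have hxΩ := hKΩ i hx
    set d : ℝ := ⨆ x : K i, Metric.infDist (x : EuclideanSpace ℝ (Fin 2)) Ωᶜ with hd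
    have hdx : Metric.infDist x Ωᶜ ≤ d := by
      refine le_ciSup (f := fun x : K i => Metric.infDist (x : E2) Ωᶜ) ?_ ⟨x, hx⟩
      refine ⟨Metric.diam Ω, ?_⟩
      rintro _ ⟨y, rfl⟩
      exact infDist_le_diam hB (hKΩ i y.2)
    have hd0 : 0 ≤ d := Metric.infDist_nonneg.trans hdx
    have hdiam : 0 ≤ Metric.diam Ω := Metric.diam_nonneg
    have hLi : L i = Real.log (1 + d * Metric.diam Ω * s ^ 2) := by rw [hs2]
    have step : ∀ᵐ ξ ∂(volume.restrict Ω), ‖G x ξ‖ₑ ^ 2 ≤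
        ENNReal.ofReal (C₀ ^ 2 * (2 * L i ^ 2 + 2)) * 1 +
        ENNReal.ofReal (C₀ ^ 2 * 2) * ENNReal.ofReal (phi s ‖x - ξ‖) := by
      have hne : ∀ᵐ ξ ∂(volume.restrict Ω), ξ ≠ x :=
        ae_restrict_of_ae (compl_mem_ae_iff.mpr (measure_singleton x))
      filter_upwards [hne, ae_restrict_mem hΩm] with ξ h1 h2
      obtain ⟨g0, g1⟩ := hG x hxΩ ξ h2 h1.symm
      have hr : 0 < dist x ξ := dist_pos.mpr h1.symm
      have hph : 0 ≤ phi s ‖x - ξ‖ := phi_nonneg hspos (norm_nonneg _)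
      rw [mul_one, ← ENNReal.ofReal_mul (by positivity),
        ← ENNReal.ofReal_add (by positivity) (by positivity), Real.enorm_of_nonneg g0,
        ← ENNReal.ofReal_pow g0]
      apply ENNReal.ofReal_le_ofReal
      have hi0 : 0 ≤ Metric.infDist x Ωᶜ := Metric.infDist_nonneg
      have hi1 : 0 ≤ Metric.infDist ξ Ωᶜ := Metric.infDist_nonneg
      have hi2 := infDist_le_diam hB h2
      have g2 : G x ξ ≤ C₀ * Real.log (1 + d * Metric.diam Ω / dist x ξ ^ 2) := by
        refine g1.trans ?_
        gcongr
      have g3 := log_bound2 (a := d * Metric.diam Ω) hspos hr (by positivity)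
      rw [← hLi] at g3
      rw [← dist_eq_norm]
      calc G x ξ ^ 2 ≤ (C₀ * Real.log (1 + d * Metric.diam Ω / dist x ξ ^ 2)) ^ 2 := by gcongr
        _ = C₀ ^ 2 * Real.log (1 + d * Metric.diam Ω / dist x ξ ^ 2) ^ 2 := by ring
        _ ≤ C₀ ^ 2 * (2 * L i ^ 2 + 2 + 2 * phi s (dist x ξ)) := by gcongr
        _ = _ := by ring
    refine (hmono _ _ step).trans ?_
    rw [lintegral_add_left (by fun_prop), lintegral_const_mul' _ _ ENNReal.ofReal_ne_top,
      lintegral_const_mul' _ _ ENNReal.ofReal_ne_top, hμ1, mul_one]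
    have h3 : ∫⁻ ξ, ENNReal.ofReal (phi s ‖x - ξ‖) ∂μ ≤ ENNReal.ofReal (32 * VV) := by
      refine (hμR _).trans ?_
      rw [lintegral_sub_left_eq_self (fun y : E2 => ENNReal.ofReal (phi s ‖y‖)) x,
        phi_int hspos, ← ENNReal.ofReal_mul hRpos.le, hs2]
      apply le_of_eq
      congr 1
      field_simp
      ring
    calc _ ≤ ENNReal.ofReal (C₀ ^ 2 * (2 * L i ^ 2 + 2)) +
          ENNReal.ofReal (C₀ ^ 2 * 2) * ENNReal.ofReal (32 * VV) := by gcongr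
      _ = _ := by
        rw [← ENNReal.ofReal_mul (by positivity),
          ← ENNReal.ofReal_add (by positivity) (by positivity)]
        congr 1
        simp only [hBdef, hM]
        ring
  set A : ENNReal := ∫⁻ x, ‖u x‖ₑ ^ 2 ∂μ with hA
  have hAeq : (∫⁻ x in Ω, ENNReal.ofReal (ρ x * u x ^ 2)) = A := by
    rw [hA, ← hΩ]
    refine setLIntegral_congr_fun hΩm fun x hx => ?_
    rw [ENNReal.ofReal_mul (hρpos x hx).le, ← enorm_pow, Real.enorm_of_nonneg (sq_nonneg _)]
  rw [hAeq] at hA0 hAtop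
  have hpt : ∀ᵐ x ∂(volume.restrict Ω), ‖u x‖ₑ ^ 2 ≤
      ENNReal.ofReal (lam ^ 2) * (∫⁻ ξ, ‖G x ξ‖ₑ ^ 2 ∂μ) * A := by
    filter_upwards [heig] with x hx
    have h1 : ‖u x‖ₑ ≤ ENNReal.ofReal lam * ∫⁻ ξ, ‖G x ξ‖ₑ * ‖u ξ‖ₑ ∂μ := by
      rw [hx, enorm_mul, Real.enorm_of_nonneg hlam.le]
      gcongr
      refine (enorm_integral_le_lintegral_enorm _).trans ?_
      rw [← hΩ]
      refine le_of_eq (setLIntegral_congr_fun hΩm fun ξ hξ => ?_)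
      simp only [enorm_mul]
      rw [Real.enorm_of_nonneg (hρpos ξ hξ).le]
      ring
    have hGx : Measurable (G x) := hGm.of_uncurry_left
    calc ‖u x‖ₑ ^ 2 ≤ (ENNReal.ofReal lam * ∫⁻ ξ, ‖G x ξ‖ₑ * ‖u ξ‖ₑ ∂μ) ^ 2 := by gcongr
      _ = ENNReal.ofReal (lam ^ 2) * (∫⁻ ξ, ‖G x ξ‖ₑ * ‖u ξ‖ₑ ∂μ) ^ 2 := by
        rw [mul_pow, ENNReal.ofReal_pow hlam.le]
      _ ≤ ENNReal.ofReal (lam ^ 2) * ((∫⁻ ξ, ‖G x ξ‖ₑ ^ 2 ∂μ) * A) := by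
        gcongr
        exact cs μ hGx.enorm.aemeasurable hu.enorm.aemeasurable
      _ = _ := by ring
  set T : ℝ := ∑ i, ρv i * (volume (K i)).toReal * B i with hT
  have hmain : A ≤ ENNReal.ofReal (lam ^ 2 * T) * A := by
    calc A ≤ ∫⁻ x, ENNReal.ofReal (lam ^ 2) * (∫⁻ ξ, ‖G x ξ‖ₑ ^ 2 ∂μ) * A ∂μ := hmono _ _ hpt
      _ = ∑ i, ENNReal.ofReal (ρv i) * ∫⁻ x in K i,
            ENNReal.ofReal (lam ^ 2) * (∫⁻ ξ, ‖G x ξ‖ₑ ^ 2 ∂μ) * A := hμ _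
      _ ≤ ∑ i, ENNReal.ofReal (ρv i) * ∫⁻ x in K i,
            ENNReal.ofReal (lam ^ 2) * ENNReal.ofReal (B i) * A := by
        refine Finset.sum_le_sum fun i _ => ?_
        refine mul_le_mul_right (setLIntegral_mono' (hKm i) fun x hx => ?_) _
        gcongr
        exact hg i x hx
      _ = ∑ i, ENNReal.ofReal (lam ^ 2 * (ρv i * (volume (K i)).toReal * B i)) * A := by
        refine Finset.sum_congr rfl fun i _ => ?_
        have := (hρv i).le
        rw [lintegral_const, Measure.restrict_apply_univ, ENNReal.ofReal_mul (p := lam ^ 2) (by positivity),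
          ENNReal.ofReal_mul (p := ρv i * (volume (K i)).toReal) (by positivity),
          ENNReal.ofReal_mul (p := ρv i) (by positivity),
          ENNReal.ofReal_toReal (hvol i)]
        ring
      _ = _ := by
        rw [← Finset.sum_mul, ← ENNReal.ofReal_sum_of_nonneg, hT, Finset.mul_sum]
        intro i _
        have := (hρv i).le
        have := hBnn i
        positivity
  have h1 : 1 ≤ lam ^ 2 * T := by
    by_contra! hlt
    have h2 : ENNReal.ofReal (lam ^ 2 * T) < 1 := by
      rw [← ENNReal.ofReal_one]
      exact (ENNReal.ofReal_lt_ofReal_iff one_pos).mpr hlt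
    have h3 := ENNReal.mul_lt_mul_left hA0.ne' hAtop.ne h2
    rw [one_mul] at h3
    exact absurd hmain (not_le.mpr h3)
  set S : ℝ := ∑ i, ρv i * (volume (K i)).toReal * L i ^ 2 with hS
  have hS0 : 0 ≤ S := Finset.sum_nonneg fun i _ => by
    have := (hρv i).le
    positivity
  have hTS : T = C₀ ^ 2 * (2 * S + M) := by
    have : ∀ i, ρv i * (volume (K i)).toReal * B i =
        2 * C₀ ^ 2 * (ρv i * (volume (K i)).toReal * L i ^ 2) +
          C₀ ^ 2 * M * (ρv i * (volume (K i)).toReal) := fun i => by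
      simp only [hBdef]; ring
    rw [hT, Finset.sum_congr rfl fun i _ => this i, Finset.sum_add_distrib, ← Finset.mul_sum,
      ← Finset.mul_sum, hsum1, ← hS]
    ring
  have hT2 : T ≤ C₀ ^ 2 * (M * (1 + S)) := by
    rw [hTS]
    gcongr
    have : 2 * S ≤ M * S := by
      gcongr
      linarith
    linarith
  have hfin : 1 ≤ (lam * (C₀ * Real.sqrt M * Real.sqrt (1 + S))) ^ 2 := by
    rw [mul_pow, mul_pow, mul_pow, Real.sq_sqrt hMpos.le, Real.sq_sqrt (by linarith)]
    calc 1 ≤ lam ^ 2 * T := h1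
      _ ≤ lam ^ 2 * (C₀ ^ 2 * (M * (1 + S))) := by gcongr
      _ = _ := by ring
  have hq : 0 < Real.sqrt (1 + S) := Real.sqrt_pos.mpr (by linarith)
  have hq2 : 0 < Real.sqrt M := Real.sqrt_pos.mpr hMpos
  have hfin2 : 1 ≤ lam * (C₀ * Real.sqrt M * Real.sqrt (1 + S)) :=
    (one_le_sq_iff₀ (by positivity)).mp hfin
  rw [← mul_inv]
  exact (inv_le_iff_one_le_mul₀ (by positivity)).mpr hfin2
end

section
/- Let d ≥ 3, let Ω ⊂ ℝ^d be a bounded open set with diameter h_Ω, and let d(x) denote the Euclidean distance from x ∈ Ω to the complement of Ω. Let K_1, …, K_N be a finite partition of Ω into Lebesgue-measurable sets and let ρ_1, …, ρ_N > 0 be constants defining ρ : Ω → ℝ by ρ = ρ_i on K_i, with ∫_Ω ρ dx = 1; write |K_i| for the Lebesgue measure of K_i and d_{K_i} = sup_{x ∈ K_i} d(x). Let C₀ > 0 and let G : Ω × Ω → ℝ be measurable with 0 ≤ G(x,ξ) ≤ C₀ |x−ξ|^{2−d} min{1, d(x)d(ξ)/|x−ξ|²} for all x ≠ ξ in Ω.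 Fix p ∈ (1, d/(d−2)) and set q = p/(p−1). Suppose λ > 0 and u : Ω → ℝ is measurable, u > 0 almost everywhere, 0 < ∫_Ω ρ^q u^q dx < ∞, and u(x) = λ ∫_Ω G(x,ξ) ρ(ξ) u(ξ) dξ for almost every x ∈ Ω. Then there exists a constant C > 0, depending only on d, C₀ and h_Ω (but not on p, the partition, ρ, u or λ), such that λ ≥ C · ( d/(d−2) − p )^{d/(d+2p)} · ( Σ_{i=1}^N ρ_i^q |K_i| d_{K_i}^{ q(d−(d−2)p)/(d+2p) } )^{−1/q}. -/
open MeasureTheory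

lemma radial_bound (d : ℕ) (hd : 3 ≤ d) (s r : ℝ) (hr : 0 < r) (hs : s < d)
    (x : EuclideanSpace ℝ (Fin d)) :
    ∫⁻ ξ in Metric.ball x r, ENNReal.ofReal (dist x ξ ^ (-s)) ≤
      ENNReal.ofReal (d * volume.real (Metric.ball (0 : EuclideanSpace ℝ (Fin d)) 1)
        * (r ^ (d - s) / (d - s))) := by
  have : Nonempty (Fin d) := ⟨⟨0, by omega⟩⟩
  have : Nontrivial (EuclideanSpace ℝ (Fin d)) := inferInstance
  have hfr : Module.finrank ℝ (EuclideanSpace ℝ (Fin d)) = d := by simp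
  set f : ℝ → ℝ := (Set.Iio r).indicator (fun y => y ^ (-s)) with hf
  have key : ∀ y ∈ Set.Ioi (0:ℝ), y ^ (d - 1) • f y
      = (Set.Ioo 0 r).indicator (fun y => y ^ ((d:ℝ) - 1 - s)) y := by
    intro y hy
    have hy' : 0 < y := hy
    by_cases h : y < r
    · rw [hf, Set.indicator_of_mem (by exact h), Set.indicator_of_mem (by exact ⟨hy', h⟩),
        smul_eq_mul, ← Real.rpow_natCast, ← Real.rpow_add hy']
      congr 1
      rw [Nat.cast_sub (by omega)]; push_cast; ring
    · rw [hf, Set.indicator_of_notMem (by simpa using h), Set.indicator_of_notMem (by simp [h])]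
      simp
  have hii : IntegrableOn (fun y : ℝ => y ^ ((d:ℝ) - 1 - s)) (Set.Ioo 0 r) := by
    have := intervalIntegral.intervalIntegrable_rpow' (a := 0) (b := r)
      (r := (d:ℝ) - 1 - s) (by linarith)
    rw [intervalIntegrable_iff_integrableOn_Ioo_of_le hr.le] at this
    exact this
  have hint : Integrable (fun ξ : EuclideanSpace ℝ (Fin d) => f ‖ξ‖) := by
    rw [integrable_fun_norm_addHaar, hfr, integrableOn_congr_fun key measurableSet_Ioi]
    exact (hii.integrable_indicator measurableSet_Ioo).integrableOn
  have hval : ∫ ξ : EuclideanSpace ℝ (Fin d), f ‖ξ‖ =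
      d * volume.real (Metric.ball (0 : EuclideanSpace ℝ (Fin d)) 1)
        * (r ^ (d - s) / (d - s)) := by
    rw [integral_fun_norm_addHaar, hfr, setIntegral_congr_fun measurableSet_Ioi key,
      setIntegral_indicator measurableSet_Ioo]
    have : Set.Ioi (0:ℝ) ∩ Set.Ioo 0 r = Set.Ioo 0 r := by
      ext y; simp
    rw [this, ← integral_Ioc_eq_integral_Ioo, ← intervalIntegral.integral_of_le hr.le,
      integral_rpow (Or.inl (by linarith))]
    have e : (d:ℝ) - 1 - s + 1 = d - s := by ring
    rw [e, Real.zero_rpow (by linarith : (0:ℝ) < d - s).ne']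
    simp [mul_assoc]
  have hnn : ∀ y, 0 ≤ y → 0 ≤ f y := by
    intro y hy
    rw [hf]
    by_cases h : y < r
    · rw [Set.indicator_of_mem (by exact h)]; positivity
    · rw [Set.indicator_of_notMem (by simpa using h)]
  rw [← hval, ofReal_integral_eq_lintegral_ofReal hint
    (Filter.Eventually.of_forall fun ξ => hnn _ (norm_nonneg _)),
    ← lintegral_sub_right_eq_self (fun ξ => ENNReal.ofReal (f ‖ξ‖)) x, ← lintegral_indicator measurableSet_ball]
  apply lintegral_mono
  intro ξ
  by_cases h : ξ ∈ Metric.ball x r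
  · rw [Set.indicator_of_mem h]
    have h2 : ‖ξ - x‖ < r := by rwa [Metric.mem_ball, dist_eq_norm] at h
    simp only [hf]
    rw [Set.indicator_of_mem (by exact h2), dist_comm, dist_eq_norm]
  · rw [Set.indicator_of_notMem h]; exact bot_le

lemma infDist_le_H {d : ℕ} (hd : 3 ≤ d) {Ω : Set (EuclideanSpace ℝ (Fin d))}
    (hb : Bornology.IsBounded Ω) (x : EuclideanSpace ℝ (Fin d)) (hx : x ∈ Ω) :
    Metric.infDist x Ωᶜ ≤ Metric.diam Ω := by
  have : Nonempty (Fin d) := ⟨⟨0, by omega⟩⟩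
  have : Nontrivial (EuclideanSpace ℝ (Fin d)) := inferInstance
  apply le_of_forall_lt
  intro c hc
  by_contra hcon
  push Not at hcon
  obtain ⟨c', h1, h2⟩ := exists_between hc
  have hc0 : 0 ≤ c' := by
    have := Metric.diam_nonneg (s := Ω); linarith
  obtain ⟨v, hv⟩ := exists_norm_eq (EuclideanSpace ℝ (Fin d)) hc0
  have hm : x + v ∈ Ω := Metric.ball_infDist_compl_subset (x := x) (by simp [hv, h2])
  have := Metric.dist_le_diam_of_mem hb hm hx
  simp [hv] at this
  linarith

lemma compl_ne {d : ℕ} (hd : 3 ≤ d) {Ω : Set (EuclideanSpace ℝ (Fin d))}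
    (hb : Bornology.IsBounded Ω) : (Ωᶜ).Nonempty := by
  have : Nonempty (Fin d) := ⟨⟨0, by omega⟩⟩
  have : Nontrivial (EuclideanSpace ℝ (Fin d)) := inferInstance
  rw [Set.nonempty_compl]
  rintro rfl
  exact NormedSpace.unbounded_univ ℝ _ hb

lemma r_eq1 (D p e δ ε : ℝ) (hp : 0 < p) (hD : 0 < D) (hδ : 0 < δ) (hε : 0 < ε)
    (he : e = D - (D - 2) * p) :
    (δ * ((ε * δ ^ p) ^ (1 / (D + 2 * p))) ^ (-D)) ^ p =
      ((ε * δ ^ p) ^ (1 / (D + 2 * p))) ^ e / ε := by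
  obtain ⟨a, rfl⟩ : ∃ a, δ = Real.exp a := ⟨Real.log δ, (Real.exp_log hδ).symm⟩
  obtain ⟨b, rfl⟩ : ∃ b, ε = Real.exp b := ⟨Real.log ε, (Real.exp_log hε).symm⟩
  simp only [← Real.exp_mul, ← Real.exp_add, ← Real.exp_sub]
  congr 1
  subst he
  have : D + 2 * p ≠ 0 := by positivity
  field_simp
  ring

lemma r_eq2 (D p e δ ε : ℝ) (hp : 0 < p) (hD : 0 < D) (hδ : 0 < δ) (hε : 0 < ε)
    (he : e = D - (D - 2) * p) :
    (((ε * δ ^ p) ^ (1 / (D + 2 * p))) ^ e / ε) ^ (1 / p) =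
      ε ^ (-(D / (D + 2 * p))) * δ ^ (e / (D + 2 * p)) := by
  obtain ⟨a, rfl⟩ : ∃ a, δ = Real.exp a := ⟨Real.log δ, (Real.exp_log hδ).symm⟩
  obtain ⟨b, rfl⟩ : ∃ b, ε = Real.exp b := ⟨Real.log ε, (Real.exp_log hε).symm⟩
  simp only [← Real.exp_mul, ← Real.exp_add, ← Real.exp_sub]
  congr 1
  subst he
  have : D + 2 * p ≠ 0 := by positivity
  field_simp
  ring

noncomputable def MM (d : ℕ) (H : ℝ) : ℝ :=
  d * volume.real (Metric.ball (0 : EuclideanSpace ℝ (Fin d)) 1) +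
    volume.real (Metric.ball (0 : EuclideanSpace ℝ (Fin d)) 1) * max 1 H ^ d * max 1 H ^ 3 + 1

lemma one_le_MM (d : ℕ) (H : ℝ) : 1 ≤ MM d H := by
  unfold MM
  have : 0 ≤ max 1 H := le_trans zero_le_one (le_max_left _ _)
  have : 0 ≤ volume.real (Metric.ball (0 : EuclideanSpace ℝ (Fin d)) 1) := measureReal_nonneg
  have : 0 ≤ d * volume.real (Metric.ball (0 : EuclideanSpace ℝ (Fin d)) 1) +
    volume.real (Metric.ball (0 : EuclideanSpace ℝ (Fin d)) 1) * max 1 H ^ d * max 1 H ^ 3 := by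
    positivity
  linarith

lemma vol_le {d : ℕ} {H : ℝ} {Ω : Set (EuclideanSpace ℝ (Fin d))}
    (hb : Bornology.IsBounded Ω) (hH : Metric.diam Ω = H)
    (x : EuclideanSpace ℝ (Fin d)) (hx : x ∈ Ω) :
    volume Ω ≤ ENNReal.ofReal
      (volume.real (Metric.ball (0 : EuclideanSpace ℝ (Fin d)) 1) * max 1 H ^ d) := by
  have h0 : 0 ≤ max 1 H := le_trans zero_le_one (le_max_left _ _)
  have hsub : Ω ⊆ Metric.closedBall x (max 1 H) := by
    intro y hy
    rw [Metric.mem_closedBall]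
    exact (Metric.dist_le_diam_of_mem hb hy hx).trans (hH ▸ le_max_right _ _)
  refine (measure_mono hsub).trans ?_
  rw [Measure.addHaar_closedBall _ _ h0, mul_comm, ENNReal.ofReal_mul measureReal_nonneg,
    ofReal_measureReal (measure_ball_lt_top.ne)]
  simp

lemma green_bound (d : ℕ) (hd : 3 ≤ d) (C₀ : ℝ) (hC₀ : 0 < C₀) (H : ℝ)
    (Ω : Set (EuclideanSpace ℝ (Fin d))) (hopen : IsOpen Ω) (hb : Bornology.IsBounded Ω)
    (hH : Metric.diam Ω = H) (g : EuclideanSpace ℝ (Fin d) → ℝ)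
    (p : ℝ) (x : EuclideanSpace ℝ (Fin d)) (hx : x ∈ Ω)
    (hg : ∀ ξ ∈ Ω, x ≠ ξ → 0 ≤ g ξ ∧
          g ξ ≤ C₀ * dist x ξ ^ ((2 : ℝ) - d) *
            min 1 (Metric.infDist x Ωᶜ * Metric.infDist ξ Ωᶜ / dist x ξ ^ 2))
    (hp1 : 1 < p) (hp2 : p < (d : ℝ) / ((d : ℝ) - 2)) :
    (∫⁻ ξ in Ω, ‖g ξ‖ₑ ^ p) ^ (1 / p) ≤
      ENNReal.ofReal (C₀ * MM d H * ((d : ℝ) / ((d : ℝ) - 2) - p) ^ (-((d : ℝ) / (d + 2 * p))) *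
        Metric.infDist x Ωᶜ ^ (((d : ℝ) - ((d : ℝ) - 2) * p) / (d + 2 * p))) := by
  have hd3 : (3:ℝ) ≤ d := by exact_mod_cast hd
  have hp0 : 0 < p := by linarith
  set δ := Metric.infDist x Ωᶜ with hδdef
  have hδ : 0 < δ := (hopen.isClosed_compl.notMem_iff_infDist_pos (compl_ne hd hb)).1 (by simpa)
  set ε : ℝ := (d : ℝ) - ((d : ℝ) - 2) * p with hεdef
  have hεη : ε = ((d:ℝ) - 2) * ((d : ℝ) / ((d : ℝ) - 2) - p) := by
    have : (d:ℝ) - 2 ≠ 0 := by linarith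
    rw [hεdef]; field_simp
  set η : ℝ := (d : ℝ) / ((d : ℝ) - 2) - p with hη
  have hη0 : 0 < η := by rw [hη]; linarith
  have hε : 0 < ε := by rw [hεη]; apply mul_pos <;> linarith
  have hp3 : p ≤ 3 := by
    have : (d : ℝ) / ((d : ℝ) - 2) ≤ 3 := by rw [div_le_iff₀] <;> linarith
    linarith
  set r := (ε * δ ^ p) ^ (1 / ((d:ℝ) + 2 * p)) with hr
  have hr0 : 0 < r := by rw [hr]; positivity
  set h := max 1 H with hh
  have h1 : 1 ≤ h := le_max_left _ _
  have h0 : 0 < h := by linarith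
  set ω := volume.real (Metric.ball (0 : EuclideanSpace ℝ (Fin d)) 1) with hω
  have hω0 : 0 ≤ ω := measureReal_nonneg
  set s : ℝ := ((d:ℝ) - 2) * p with hs
  have pt : ∀ᵐ ξ ∂(volume.restrict Ω), ‖g ξ‖ₑ ^ p ≤
      (Metric.ball x r).indicator
        (fun ξ => ENNReal.ofReal (C₀ ^ p) * ENNReal.ofReal (dist x ξ ^ (-s))) ξ
      + ENNReal.ofReal (C₀ ^ p * (δ * h * r ^ (-(d:ℝ))) ^ p) := by
    have hne : ∀ᵐ ξ ∂(volume.restrict Ω), ξ ≠ x := by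
      apply ae_restrict_of_ae
      have : Nonempty (Fin d) := ⟨⟨0, by omega⟩⟩
      have : Nontrivial (EuclideanSpace ℝ (Fin d)) := inferInstance
      exact Measure.ae_ne volume x
    filter_upwards [hne, ae_restrict_mem hopen.measurableSet] with ξ hξ hξΩ
    obtain ⟨g0, g1⟩ := hg ξ hξΩ hξ.symm
    have hdist : 0 < dist x ξ := dist_pos.2 hξ.symm
    rw [Real.enorm_eq_ofReal g0, ENNReal.ofReal_rpow_of_nonneg g0 hp0.le]
    by_cases hball : ξ ∈ Metric.ball x r
    · rw [Set.indicator_of_mem hball, ← ENNReal.ofReal_mul (by positivity)]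
      refine le_trans (ENNReal.ofReal_le_ofReal ?_) le_self_add
      calc g ξ ^ p ≤ (C₀ * dist x ξ ^ ((2 : ℝ) - d)) ^ p := by
            apply Real.rpow_le_rpow g0 _ hp0.le
            refine g1.trans (mul_le_of_le_one_right (by positivity) (min_le_left _ _))
        _ = C₀ ^ p * dist x ξ ^ (-s) := by
            rw [Real.mul_rpow hC₀.le (by positivity), ← Real.rpow_mul hdist.le]
            congr 2; rw [hs]; ring
    · rw [Set.indicator_of_notMem hball, zero_add]
      apply ENNReal.ofReal_le_ofReal
      have hrd : r ≤ dist x ξ := by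
        rw [Metric.mem_ball, dist_comm] at hball; linarith
      have hdξ : Metric.infDist ξ Ωᶜ ≤ h :=
        (infDist_le_H hd hb ξ hξΩ).trans (hH ▸ le_max_right _ _)
      rw [← Real.mul_rpow hC₀.le (by positivity)]
      apply Real.rpow_le_rpow g0 _ hp0.le
      calc g ξ ≤ C₀ * dist x ξ ^ ((2 : ℝ) - d) *
            (δ * Metric.infDist ξ Ωᶜ / dist x ξ ^ 2) := 
            g1.trans (mul_le_mul_of_nonneg_left (min_le_right _ _) (by positivity))
        _ ≤ C₀ * dist x ξ ^ ((2 : ℝ) - d) * (δ * h / dist x ξ ^ 2) := by gcongr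
        _ = C₀ * (δ * h * dist x ξ ^ (-(d:ℝ))) := by
            have : dist x ξ ^ ((2 : ℝ) - d) = dist x ξ ^ (-(d:ℝ)) * dist x ξ ^ 2 := by
              rw [← Real.rpow_natCast, ← Real.rpow_add hdist]; congr 1; push_cast; ring
            rw [this]; field_simp
        _ ≤ C₀ * (δ * h * r ^ (-(d:ℝ))) := by
            have := Real.rpow_le_rpow_of_nonpos hr0 hrd (show -(d:ℝ) ≤ 0 by linarith)
            gcongr
  have I1 : ∫⁻ ξ in Ω, ‖g ξ‖ₑ ^ p ≤ ENNReal.ofReal (C₀ ^ p * (MM d H * (r ^ ε / ε))) := by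
    refine (lintegral_mono_ae pt).trans ?_
    rw [lintegral_add_right _ measurable_const, lintegral_const, Measure.restrict_apply_univ]
    have e1 : ∫⁻ ξ in Ω, (Metric.ball x r).indicator
        (fun ξ => ENNReal.ofReal (C₀ ^ p) * ENNReal.ofReal (dist x ξ ^ (-s))) ξ ≤
        ENNReal.ofReal (C₀ ^ p * (d * ω * (r ^ ε / ε))) := by
      refine (lintegral_mono' Measure.restrict_le_self le_rfl).trans ?_
      rw [lintegral_indicator measurableSet_ball,
        lintegral_const_mul' _ _ ENNReal.ofReal_ne_top, ENNReal.ofReal_mul (by positivity)]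
      gcongr
      exact radial_bound d hd s r hr0 (by linarith) x
    have e2 : ENNReal.ofReal (C₀ ^ p * (δ * h * r ^ (-(d:ℝ))) ^ p) * volume Ω ≤
        ENNReal.ofReal (C₀ ^ p * (ω * h ^ d * h ^ 3 * (r ^ ε / ε))) := by
      refine (mul_le_mul_right (vol_le hb hH x hx) _).trans ?_
      rw [← ENNReal.ofReal_mul (by positivity)]
      apply ENNReal.ofReal_le_ofReal
      have e3 : (δ * h * r ^ (-(d:ℝ))) ^ p = h ^ p * (r ^ ε / ε) := by
        rw [hr, ← r_eq1 (d:ℝ) p ε δ ε hp0 (by linarith) hδ hε hεdef, ← hr,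
          ← Real.mul_rpow h0.le (by positivity)]
        congr 1; ring
      have e4 : h ^ p ≤ h ^ 3 := by
        rw [← Real.rpow_natCast]
        exact Real.rpow_le_rpow_of_exponent_le h1 (by simpa using hp3)
      rw [e3]
      calc C₀ ^ p * (h ^ p * (r ^ ε / ε)) * (ω * h ^ d) 
          ≤ C₀ ^ p * (h ^ 3 * (r ^ ε / ε)) * (ω * h ^ d) := by gcongr
        _ = _ := by ring
    refine (add_le_add e1 e2).trans ?_
    rw [← ENNReal.ofReal_add (by positivity) (by positivity)]
    apply ENNReal.ofReal_le_ofReal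
    rw [← mul_add]
    apply mul_le_mul_of_nonneg_left _ (by positivity)
    rw [← add_mul]
    apply mul_le_mul_of_nonneg_right _ (by positivity)
    unfold MM
    linarith
  have hM := one_le_MM d H
  have hM0 : 0 < MM d H := by linarith
  refine (ENNReal.rpow_le_rpow I1 (by positivity)).trans ?_
  rw [ENNReal.ofReal_rpow_of_nonneg (by positivity) (by positivity)]
  apply ENNReal.ofReal_le_ofReal
  rw [Real.mul_rpow (by positivity) (by positivity), Real.mul_rpow (by positivity) (by positivity),
    ← Real.rpow_mul hC₀.le, mul_one_div_cancel hp0.ne', Real.rpow_one, hr,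
    r_eq2 (d:ℝ) p ε δ ε hp0 (by linarith) hδ hε hεdef]
  have f1 : MM d H ^ (1 / p) ≤ MM d H := by
    conv_rhs => rw [← Real.rpow_one (MM d H)]
    apply Real.rpow_le_rpow_of_exponent_le hM
    rw [div_le_one hp0]; exact hp1.le
  have f2 : ε ^ (-((d:ℝ) / (d + 2 * p))) ≤ η ^ (-((d:ℝ) / (d + 2 * p))) := by
    apply Real.rpow_le_rpow_of_nonpos hη0
    · rw [hεη]; nlinarith
    · have : 0 ≤ (d:ℝ) / (d + 2 * p) := by positivity
      linarith
  calc _ ≤ C₀ * (MM d H * (η ^ (-((d:ℝ) / (d + 2 * p))) * δ ^ (ε / (d + 2 * p)))) := by gcongr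
    _ = _ := by ring


/-- Lower bound, in dimension `d ≥ 3`, for the smallest eigenvalue of the
density-weighted eigenvalue problem `-Δu = λ ρ u` with homogeneous Dirichlet
boundary conditions, via the Riesz-type Green's-function bound.  The constant
`C` depends only on `d`, `C₀` and the diameter `H` of `Ω`, but not on `p`, the
partition, `ρ`, `u` or `λ`. -/
theorem eigenvalue_lower_bound_high_dim
    (d : ℕ) (hd : 3 ≤ d) (C₀ : ℝ) (hC₀ : 0 < C₀) (H : ℝ) :
    ∃ C : ℝ, 0 < C ∧
      ∀ (Ω : Set (EuclideanSpace ℝ (Fin d))) (N : ℕ)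
        (K : Fin N → Set (EuclideanSpace ℝ (Fin d))) (ρv : Fin N → ℝ)
        (ρ : EuclideanSpace ℝ (Fin d) → ℝ)
        (G : EuclideanSpace ℝ (Fin d) → EuclideanSpace ℝ (Fin d) → ℝ)
        (p q : ℝ) (u : EuclideanSpace ℝ (Fin d) → ℝ) (lam : ℝ),
        IsOpen Ω → Bornology.IsBounded Ω → Metric.diam Ω = H →
        (∀ i, MeasurableSet (K i)) → Pairwise (Function.onFun Disjoint K) →
        (⋃ i, K i) = Ω →
        (∀ i, 0 < ρv i) → (∀ i, ∀ x ∈ K i, ρ x = ρv i) →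
        (∫ x in Ω, ρ x) = 1 →
        Measurable (Function.uncurry G) →
        (∀ x ∈ Ω, ∀ ξ ∈ Ω, x ≠ ξ → 0 ≤ G x ξ ∧
          G x ξ ≤ C₀ * dist x ξ ^ ((2 : ℝ) - d) *
            min 1 (Metric.infDist x Ωᶜ * Metric.infDist ξ Ωᶜ / dist x ξ ^ 2)) →
        1 < p → p < (d : ℝ) / ((d : ℝ) - 2) → q = p / (p - 1) →
        0 < lam → Measurable u →
        (∀ᵐ x ∂(volume.restrict Ω), 0 < u x) →
        0 < (∫⁻ x in Ω, ENNReal.ofReal (ρ x ^ q * u x ^ q)) →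
        (∫⁻ x in Ω, ENNReal.ofReal (ρ x ^ q * u x ^ q)) < ⊤ →
        (∀ᵐ x ∂(volume.restrict Ω),
          u x = lam * ∫ ξ in Ω, G x ξ * ρ ξ * u ξ) →
        C * ((d : ℝ) / ((d : ℝ) - 2) - p) ^ ((d : ℝ) / ((d : ℝ) + 2 * p)) *
          (∑ i, ρv i ^ q * (volume (K i)).toReal *
            (⨆ x : K i, Metric.infDist (x : EuclideanSpace ℝ (Fin d)) Ωᶜ) ^
              (q * ((d : ℝ) - ((d : ℝ) - 2) * p) / ((d : ℝ) + 2 * p))) ^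
            (-(1 : ℝ) / q) ≤ lam := by

  have hM := one_le_MM d H
  have hM0 : 0 < MM d H := by linarith
  have hd3 : (3:ℝ) ≤ d := by exact_mod_cast hd
  refine ⟨1 / (C₀ * MM d H), by positivity, ?_⟩
  intro Ω N K ρv ρ G p q u lam hopen hb hH hKm hKd hKU hρv hρ _ hGm hG hp1 hp2 hq hlam hum hu
    hI0 hItop heq
  have hp0 : 0 < p := by linarith
  have hpq : p.HolderConjugate q := (Real.holderConjugate_iff_eq_conjExponent hp1).2 hq
  have hq0 : 0 < q := hpq.symm.pos
  set η : ℝ := (d : ℝ) / ((d : ℝ) - 2) - p with hη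
  have hη0 : 0 < η := by rw [hη]; linarith
  have hε : 0 < (d : ℝ) - ((d : ℝ) - 2) * p := by
    have := (lt_div_iff₀ (by linarith : (0:ℝ) < d - 2)).1 hp2
    linarith
  set θ : ℝ := ((d : ℝ) - ((d : ℝ) - 2) * p) / ((d : ℝ) + 2 * p) with hθ
  have hθ0 : 0 < θ := by rw [hθ]; positivity
  have hθq : q * ((d : ℝ) - ((d : ℝ) - 2) * p) / ((d : ℝ) + 2 * p) = θ * q := by
    rw [hθ]; ring
  rw [hθq]
  set B : ℝ := C₀ * MM d H * η ^ (-((d : ℝ) / (d + 2 * p))) with hB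
  have hB0 : 0 < B := by rw [hB]; positivity
  have hρpos : ∀ x ∈ Ω, 0 < ρ x := by
    intro x hx
    rw [← hKU] at hx
    obtain ⟨i, hi⟩ := Set.mem_iUnion.1 hx
    rw [hρ i x hi]; exact hρv i
  have hρm : AEMeasurable ρ (volume.restrict Ω) := by
    rw [← hKU, aemeasurable_iUnion_iff]
    intro i
    refine (aemeasurable_const (b := ρv i)).congr ?_
    filter_upwards [ae_restrict_mem (hKm i)] with x hx
    exact (hρ i x hx).symm
  set I := ∫⁻ x in Ω, ENNReal.ofReal (ρ x ^ q * u x ^ q) with hI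
  have hIeq : ∫⁻ x in Ω, ‖ρ x * u x‖ₑ ^ q = I := by
    rw [hI]
    apply lintegral_congr_ae
    filter_upwards [hu, ae_restrict_mem hopen.measurableSet] with x hx hxΩ
    have := hρpos x hxΩ
    rw [Real.enorm_eq_ofReal (by positivity), ENNReal.ofReal_rpow_of_nonneg (by positivity) hq0.le,
      Real.mul_rpow this.le hx.le]
  set D : Fin N → ℝ := fun i => ⨆ x : K i, Metric.infDist (x : EuclideanSpace ℝ (Fin d)) Ωᶜ with hD
  have hD0 : ∀ i, 0 ≤ D i := fun i => Real.iSup_nonneg fun _ => Metric.infDist_nonneg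
  have hKΩ : ∀ i, K i ⊆ Ω := fun i => hKU ▸ Set.subset_iUnion K i
  have hDle : ∀ i, ∀ x ∈ K i, Metric.infDist x Ωᶜ ≤ D i := by
    intro i x hx
    refine le_ciSup (f := fun x : K i => Metric.infDist (x : EuclideanSpace ℝ (Fin d)) Ωᶜ)
      ⟨H, ?_⟩ ⟨x, hx⟩
    rintro _ ⟨y, rfl⟩
    exact hH ▸ infDist_le_H hd hb y (hKΩ i y.2)
  -- pointwise bound
  have pt : ∀ᵐ x ∂(volume.restrict Ω), ENNReal.ofReal (ρ x ^ q * u x ^ q) ≤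
      ENNReal.ofReal ((lam * B) ^ q * (ρ x ^ q * Metric.infDist x Ωᶜ ^ (θ * q))) * I := by
    filter_upwards [hu, heq, ae_restrict_mem hopen.measurableSet] with x hux hxe hxΩ
    have hρx := hρpos x hxΩ
    have hδ : 0 ≤ Metric.infDist x Ωᶜ := Metric.infDist_nonneg
    have hGx : Measurable (G x) := hGm.comp measurable_prodMk_left
    have b1 : ENNReal.ofReal (u x) ≤
        ENNReal.ofReal (lam * (B * Metric.infDist x Ωᶜ ^ θ)) * I ^ (1 / q) := by
      rw [← Real.enorm_eq_ofReal hux.le]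
      conv_lhs => rw [hxe]
      rw [enorm_mul, Real.enorm_eq_ofReal hlam.le, ENNReal.ofReal_mul hlam.le, mul_assoc]
      gcongr
      refine (enorm_integral_le_lintegral_enorm _).trans ?_
      have := ENNReal.lintegral_mul_le_Lp_mul_Lq (volume.restrict Ω) hpq
        (f := fun ξ => ‖G x ξ‖ₑ) (g := fun ξ => ‖ρ ξ * u ξ‖ₑ)
        hGx.enorm.aemeasurable (hρm.mul hum.aemeasurable).enorm
      rw [hIeq] at this
      refine le_trans (le_of_eq ?_) (this.trans ?_)
      · apply lintegral_congr
        intro ξ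
        simp only [Pi.mul_apply, ← enorm_mul, mul_assoc]
      · gcongr
        exact green_bound d hd C₀ hC₀ H Ω hopen hb hH (G x) p x hxΩ (hG x hxΩ) hp1 hp2
    have b2 := ENNReal.rpow_le_rpow b1 hq0.le
    rw [ENNReal.mul_rpow_of_nonneg _ _ hq0.le, ← ENNReal.rpow_mul,
      one_div_mul_cancel hq0.ne', ENNReal.rpow_one,
      ENNReal.ofReal_rpow_of_nonneg hux.le hq0.le,
      ENNReal.ofReal_rpow_of_nonneg (by positivity) hq0.le] at b2
    rw [ENNReal.ofReal_mul (by positivity)]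
    refine (mul_le_mul_right b2 _).trans (le_of_eq ?_)
    rw [← mul_assoc, ← ENNReal.ofReal_mul (by positivity)]
    congr 2
    rw [← mul_assoc lam, Real.mul_rpow (by positivity) (by positivity), ← Real.rpow_mul hδ]
    ring
  set S : ℝ := ∑ i, ρv i ^ q * (volume (K i)).toReal * D i ^ (θ * q) with hS
  have hS0 : 0 ≤ S := Finset.sum_nonneg fun i _ => by
    have := hρv i
    have := hD0 i
    positivity
  have hmain : I ≤ ENNReal.ofReal ((lam * B) ^ q * S) * I := by
    have hvol : ∀ i, volume (K i) ≠ ⊤ := fun i =>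
      ((measure_mono (hKΩ i)).trans_lt hb.measure_lt_top).ne
    calc I ≤ ∫⁻ x in Ω, ENNReal.ofReal
            ((lam * B) ^ q * (ρ x ^ q * Metric.infDist x Ωᶜ ^ (θ * q))) * I :=
          lintegral_mono_ae pt
      _ = ∑ i, ∫⁻ x in K i, ENNReal.ofReal
            ((lam * B) ^ q * (ρ x ^ q * Metric.infDist x Ωᶜ ^ (θ * q))) * I := by
          conv_lhs => rw [← hKU]
          rw [lintegral_iUnion hKm hKd, tsum_fintype, hKU]
      _ ≤ ∑ i, ENNReal.ofReal ((lam * B) ^ q * (ρv i ^ q * (volume (K i)).toReal *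
            D i ^ (θ * q))) * I := by
          apply Finset.sum_le_sum
          intro i _
          have hρi := hρv i
          have hDi := hD0 i
          calc _ ≤ ∫⁻ x in K i, ENNReal.ofReal
                ((lam * B) ^ q * (ρv i ^ q * D i ^ (θ * q))) * I := by
                apply setLIntegral_mono' (hKm i)
                intro x hx
                rw [hρ i x hx]
                have := hDle i x hx
                have : 0 ≤ Metric.infDist x Ωᶜ := Metric.infDist_nonneg
                gcongr
            _ = _ := by
                rw [lintegral_const, Measure.restrict_apply_univ, mul_right_comm,
                  ← ENNReal.ofReal_toReal (hvol i), ← ENNReal.ofReal_mul (by positivity),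
                  ENNReal.ofReal_toReal (hvol i)]
                congr 2; ring
      _ = _ := by
          rw [← Finset.sum_mul, ← ENNReal.ofReal_sum_of_nonneg, hS, Finset.mul_sum]
          intro i _
          have hρi := hρv i
          have hDi := hD0 i
          positivity
  have hone : 1 ≤ (lam * B) ^ q * S := by
    by_contra hcon
    push Not at hcon
    have : ENNReal.ofReal ((lam * B) ^ q * S) < 1 := by
      rw [← ENNReal.ofReal_one]; exact (ENNReal.ofReal_lt_ofReal_iff one_pos).2 hcon
    have h2 := (ENNReal.mul_lt_mul_iff_left hI0.ne' hItop.ne).2 this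
    rw [one_mul] at h2
    exact absurd hmain (not_le.2 h2)
  have hSpos : 0 < S := by
    rcases hS0.lt_or_eq with h | h
    · exact h
    · rw [← h] at hone; norm_num at hone
  have h3 : S ^ (-(1:ℝ) / q) ≤ lam * B := by
    have h4 : 1 ≤ (lam * B) * S ^ (1 / q) := by
      have := Real.rpow_le_rpow zero_le_one hone (show 0 ≤ 1 / q by positivity)
      rwa [Real.one_rpow, Real.mul_rpow (by positivity) hS0, ← Real.rpow_mul (by positivity),
        mul_one_div_cancel hq0.ne', Real.rpow_one] at this
    rw [neg_div, Real.rpow_neg hS0, inv_le_iff_one_le_mul₀ (by positivity)]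
    exact h4
  have h5 : 1 / (C₀ * MM d H) * η ^ ((d : ℝ) / ((d : ℝ) + 2 * p)) = 1 / B := by
    rw [hB, Real.rpow_neg hη0.le]
    field_simp
  rw [h5]
  calc 1 / B * S ^ (-(1:ℝ) / q) ≤ 1 / B * (lam * B) := by gcongr
    _ = lam := by field_simp
end
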